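/- Let 𝐅 = (F_1,…,F_d) be a d-tuple of continuous cdfs on ℝ with F_{i-1} ≥ F_i pointwise for all 2 ≤ i ≤ d, and let C ∈ C^OS(𝐅). Then H(S_𝐅(C)) = log(d!) + H(C) + Σ_{i=1}^d H(δ^𝐅_{(i)}), where δ^𝐅_{(i)} = F_i ∘ G^{-1} and G = (1/d) Σ_{i=1}^d F_i. -/

import Mathlib

/-! Let `X` have marginals `F` and copula `C`, and put `Y_i = G(X_i)`.  Every marginal of `X_Π` has
cdf `G`, so `S_F(C)` is the law of `Y_Π`, the symmetrization of the law `ν` of `Y`.  As `Y` is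
ordered, `ν` is singular with respect to its permuted copies as soon as it has a density; its
density relative to the symmetrization is then the constant `d!`.  The chain rule for Radon–Nikodym
densities and the permutation invariance of the density of `Y_Π` turn this into
`H(S_F(C)) = log d! + H(ν)`.

The marginals of `ν` are the `δ_(i)` and its copula is `C`, because `δ_(i)(G(t)) = F_i(t)`.  The
entropy of `ν` relative to the product of its marginals is invariant under the almost surely
injective map `y ↦ (δ_(i)(y_i))_i`, hence equal to `H(C)`; replacing the product of the marginals by
Lebesgue measure adds `∑ H(δ_(i))`.

Since `F_i ≤ d • (1/d) ∑ F_j`, the `δ_(i)` have densities bounded by `d` on `[0,1]`.  Their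
entropies are therefore finite, and no sum of the form `⊤ + ⊥` occurs in `EReal`. -/

/- Formalization framework for "Maximum entropy distribution of order statistics with given
marginals" (Butucea, Delmas, Dutfoy, Fischer).  One-dimensional cdfs are identified with
(probability) measures on `ℝ`, and cdfs on `ℝ^d` with measures on `Fin d → ℝ`. -/

open MeasureTheory Set
open scoped ENNReal

noncomputable section

namespace MaxEntOS

variable {d : ℕ}

/-- The cumulative distribution function of a measure on `ℝ`. -/
def cdf1 (ν : Measure ℝ) (t : ℝ) : ℝ := (ν (Iic t)).toReal

/-- The cdf extended to `EReal` arguments (so that `cdfE ν ⊥ = 0` and `cdfE ν ⊤ = ν ℝ`). -/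
def cdfE (ν : Measure ℝ) (x : EReal) : ℝ := (ν {s : ℝ | (s : EReal) ≤ x}).toReal

/-- The generalized inverse (quantile function) of the cdf of `ν`, real-valued. -/
def qReal (ν : Measure ℝ) (t : ℝ) : ℝ := sInf {s : ℝ | t ≤ cdf1 ν s}

/-- The generalized inverse of a nondecreasing function `g : ℝ → ℝ`, `EReal`-valued, with the
conventions `inf ∅ = ⊤` and `inf ℝ = ⊥`. -/
def qInvE (g : ℝ → ℝ) (t : ℝ) : EReal := sInf ((fun s : ℝ => (s : EReal)) '' {s : ℝ | t ≤ g s})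

open scoped Classical in
/-- The differential entropy (with respect to Lebesgue measure) of a measure, with values in
`EReal` : it equals `⊥` if the measure is not absolutely continuous, and otherwise it is
`−∫ f log f`, computed as the difference of the lower integrals of the negative and positive
parts of `f log f`, where `f` is the density. -/
def dEntropy {α : Type*} [MeasureSpace α] (μ : Measure α) : EReal :=
  if μ ≪ (volume : Measure α) then
    ((∫⁻ x, ENNReal.ofReal
        (-((μ.rnDeriv volume x).toReal * Real.log ((μ.rnDeriv volume x).toReal))) : ℝ≥0∞) : EReal)
      - ((∫⁻ x, ENNReal.ofReal
        ((μ.rnDeriv volume x).toReal * Real.log ((μ.rnDeriv volume x).toReal)) : ℝ≥0∞) : EReal)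
  else ⊥

/-- The nondecreasing rearrangement (order statistics) of a tuple. -/
def orderStat (x : Fin d → ℝ) : Fin d → ℝ := fun i => x (Tuple.sort x i)

/-- The `i`-th one-dimensional marginal of a measure on `ℝ^d`. -/
def marg (μ : Measure (Fin d → ℝ)) (i : Fin d) : Measure ℝ := μ.map fun x => x i

/-- The multidiagonal of a measure on `ℝ^d` : the tuple of one-dimensional marginals of the
order statistics. -/
def multidiag (μ : Measure (Fin d → ℝ)) (i : Fin d) : Measure ℝ := μ.map fun x => orderStat x i

/-- The uniform distribution on `[0,1]`. -/
def uniform01 : Measure ℝ := (volume : Measure ℝ).restrict (Icc 0 1)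

/-- A copula : a probability measure on `ℝ^d` whose one-dimensional marginals are all uniform
on `[0,1]`. -/
def IsCopula (μ : Measure (Fin d → ℝ)) : Prop :=
  IsProbabilityMeasure μ ∧ ∀ i, marg μ i = uniform01

/-- A measure on `ℝ^d` is symmetric (exchangeable) if it is invariant under permutations of the
coordinates. -/
def IsSymmetric (μ : Measure (Fin d → ℝ)) : Prop :=
  ∀ π : Equiv.Perm (Fin d), μ.map (fun x => fun i => x (π i)) = μ

/-- `δ` belongs to `D` : it is the multidiagonal of some copula. -/
def IsMultidiag (δ : Fin d → Measure ℝ) : Prop :=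
  ∃ μ : Measure (Fin d → ℝ), IsCopula μ ∧ multidiag μ = δ

/-- `δ` belongs to `D^0` : it is the multidiagonal of some absolutely continuous copula. -/
def IsMultidiag0 (δ : Fin d → Measure ℝ) : Prop :=
  ∃ μ : Measure (Fin d → ℝ), IsCopula μ ∧ μ ≪ (volume : Measure (Fin d → ℝ)) ∧ multidiag μ = δ

/-- `F ∈ F_d` : `F` is a `d`-tuple of continuous one-dimensional cdfs (identified with atomless
probability measures on `ℝ`) which are stochastically ordered : `F (i-1) ≥ F i` pointwise. -/
structure IsMargOS [NeZero d] (F : Fin d → Measure ℝ) : Prop where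
  prob : ∀ i, IsProbabilityMeasure (F i)
  cont : ∀ i, ∀ t : ℝ, F i {t} = 0
  ord : ∀ i : Fin d, i ≠ 0 → ∀ t : ℝ, cdf1 (F i) t ≤ cdf1 (F (i - 1)) t

/-- `μ ∈ L^OS_d(F)` : `μ` is the distribution of a `d`-dimensional order statistic (an almost
surely nondecreasing random vector) with one-dimensional marginals `F`. -/
def IsCdfOS (F : Fin d → Measure ℝ) (μ : Measure (Fin d → ℝ)) : Prop :=
  IsProbabilityMeasure μ ∧ μ {x | Monotone x} = 1 ∧ ∀ i, marg μ i = F i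

/-- `F ∈ F_d^0` : there exists an absolutely continuous distribution of order statistics with
one-dimensional marginals `F`. -/
def IsMargOS0 [NeZero d] (F : Fin d → Measure ℝ) : Prop :=
  IsMargOS F ∧ ∃ μ : Measure (Fin d → ℝ), IsCdfOS F μ ∧ μ ≪ (volume : Measure (Fin d → ℝ))

/-- The functional `J(F) = ∑_{i=2}^d ∫ |log (F_{i-1}(t) − F_i(t))| dF_i(t) ∈ [0,∞]`. -/
def Jfun [NeZero d] (F : Fin d → Measure ℝ) : ℝ≥0∞ :=
  ∑ i : Fin d, if i = 0 then 0 else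
    ∫⁻ t, ENNReal.ofReal |Real.log (cdf1 (F (i - 1)) t - cdf1 (F i) t)| ∂(F i)

/-- The copula of a measure on `ℝ^d` (for continuous marginals this is the unique copula
provided by Sklar's theorem) : the law of `(F_1(X_1), …, F_d(X_d))`. -/
def copulaOf (μ : Measure (Fin d → ℝ)) : Measure (Fin d → ℝ) :=
  μ.map fun x => fun i => cdf1 (marg μ i) (x i)

/-- The set `C^{OS}(F)` of copulas of distributions of order statistics with marginal
cdfs `F`. -/
def copulaOS (F : Fin d → Measure ℝ) : Set (Measure (Fin d → ℝ)) :=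
  {C | ∃ μ, IsCdfOS F μ ∧ copulaOf μ = C}

/-- The joint distribution with one-dimensional marginals `F` and copula `C` : the law of
`(F_1^{-1}(U_1), …, F_d^{-1}(U_d))` where `U ∼ C`. -/
def joinCopula (F : Fin d → Measure ℝ) (C : Measure (Fin d → ℝ)) : Measure (Fin d → ℝ) :=
  C.map fun u => fun i => qReal (F i) (u i)

/-- The law of `X_Π`, where `X ∼ μ` and `Π` is an independent uniform random permutation of
`{1, …, d}`. -/
def symmetrize (μ : Measure (Fin d → ℝ)) : Measure (Fin d → ℝ) :=
  (d.factorial : ℝ≥0∞)⁻¹ • ∑ π : Equiv.Perm (Fin d), μ.map (fun x => fun i => x (π i))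

/-- The symmetrizing operator `S_F` on copulas : `S_F(C)` is the copula of `X_Π` where `X` has
one-dimensional marginals `F` and copula `C`, and `Π` is an independent uniform random
permutation. -/
def SF (F : Fin d → Measure ℝ) (C : Measure (Fin d → ℝ)) : Measure (Fin d → ℝ) :=
  copulaOf (symmetrize (joinCopula F C))

/-- The average cdf `G = (1/d) ∑_{i=1}^d F_i`. -/
def Gbar (F : Fin d → Measure ℝ) (t : ℝ) : ℝ := (∑ i, cdf1 (F i) t) / d

/-- `G` extended to `EReal` arguments (`GbarE F ⊥ = 0` and `GbarE F ⊤ = 1` for probability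
measures). -/
def GbarE (F : Fin d → Measure ℝ) (x : EReal) : ℝ := (∑ i, cdfE (F i) x) / d

/-- The multidiagonal `δ^F` associated to the marginals `F`, as a tuple of measures : the law
of `G(X_i)` where `X_i ∼ F_i`, whose cdf is `F_i ∘ G^{-1}`. -/
def mdiagF (F : Fin d → Measure ℝ) (i : Fin d) : Measure ℝ := (F i).map (Gbar F)

/-- `C` is a copula of the measure `ν` on `ℝ^d` : `C` is a copula and `ν` is the joint
distribution with the marginals of `ν` and copula `C`. -/
def IsCopulaOf (C ν : Measure (Fin d → ℝ)) : Prop :=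
  IsCopula C ∧ ν = joinCopula (marg ν) C

/-- The extended tuple of multidiagonal cdfs, with the conventions `δ_(0) = 1` and
`δ_(d+1) = 0`; the natural index `i ∈ {1, …, d}` corresponds to `δ_(i)`. -/
def dcdf (δ : Fin d → Measure ℝ) (i : ℕ) (t : ℝ) : ℝ :=
  if h0 : i = 0 then 1
  else if h : i ≤ d then cdf1 (δ ⟨i - 1, by omega⟩) t
  else 0

/-- The open set `Ψ^δ_i = {t ∈ (0,1) : δ_(i-1)(t) > δ_(i)(t)}`, for `1 ≤ i ≤ d+1`
(with the conventions `δ_(0) = 1` and `δ_(d+1) = 0`). -/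
def Psi (δ : Fin d → Measure ℝ) (i : ℕ) : Set ℝ :=
  Ioo 0 1 ∩ {t | dcdf δ i t < dcdf δ (i - 1) t}

/-- Left endpoint of the connected component of `U` containing `t`. -/
def lend (U : Set ℝ) (t : ℝ) : ℝ := sSup {s | s ≤ t ∧ s ∉ U}

/-- Right endpoint of the connected component of `U` containing `t`. -/
def rend (U : Set ℝ) (t : ℝ) : ℝ := sInf {s | t ≤ s ∧ s ∉ U}

/-- Midpoint `m_i^{(j)}` of the connected component of `U` containing `t`. -/
def midpt (U : Set ℝ) (t : ℝ) : ℝ := (lend U t + rend U t) / 2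

/-- The integrand `δ'_(i)(s) / (δ_(i-1)(s) − δ_(i)(s))` (that is, `K'_i`). -/
def kInt (δ : Fin d → Measure ℝ) (i : ℕ) (s : ℝ) : ℝ :=
  deriv (dcdf δ i) s / (dcdf δ (i - 1) s - dcdf δ i s)

/-- `K_i(t)`, integrating `K'_i` from the midpoint of the connected component of `Ψ^δ_i`
containing `t` (note `K_{d+1} = 0` holds automatically, `δ_(d+1)` being constant). -/
def Kfun (δ : Fin d → Measure ℝ) (i : ℕ) (t : ℝ) : ℝ :=
  ∫ s in (midpt (Psi δ i) t)..t, kInt δ i s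

/-- The function `a_i(t) = K'_i(t) e^{K_{i+1}(t) − K_i(t)} 1_{Ψ^δ_i ∩ Ψ^δ_{i+1}}(t)`. -/
def aFun (δ : Fin d → Measure ℝ) (i : ℕ) : ℝ → ℝ :=
  (Psi δ i ∩ Psi δ (i + 1)).indicator fun t =>
    kInt δ i t * Real.exp (Kfun δ (i + 1) t - Kfun δ i t)

/-- The set `L_δ` of `u ∈ [0,1]^d` such that `(u_(i-1), u_(i)) ⊆ Ψ^δ_i` for all `2 ≤ i ≤ d`. -/
def Lset [NeZero d] (δ : Fin d → Measure ℝ) : Set (Fin d → ℝ) :=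
  {u | (∀ j, u j ∈ Icc (0 : ℝ) 1) ∧
    ∀ i : Fin d, i ≠ 0 → Ioo (orderStat u (i - 1)) (orderStat u i) ⊆ Psi δ (i.val + 1)}

/-- The density `c_δ(u) = (1/d!) 1_{L_δ}(u) ∏_{i=1}^d a_i(u_(i))` of the maximum entropy copula
with multidiagonal `δ`. -/
def cDelta [NeZero d] (δ : Fin d → Measure ℝ) : (Fin d → ℝ) → ℝ :=
  (Lset δ).indicator fun u =>
    (d.factorial : ℝ)⁻¹ * ∏ i : Fin d, aFun δ (i.val + 1) (orderStat u i)

/-- The maximum entropy copula `C_δ` with multidiagonal `δ` : the measure with density `c_δ`. -/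
def CDelta [NeZero d] (δ : Fin d → Measure ℝ) : Measure (Fin d → ℝ) :=
  (volume : Measure (Fin d → ℝ)).withDensity fun u => ENNReal.ofReal (cDelta δ u)

/-- The density of a one-dimensional measure `ν` with respect to Lebesgue measure. -/
def densOf (ν : Measure ℝ) (t : ℝ) : ℝ := (ν.rnDeriv volume t).toReal

/-- The function `ℓ_i(t) = f_i(t) / (F_{i-1}(t) − F_i(t))`. -/
def ellF [NeZero d] (F : Fin d → Measure ℝ) (i : Fin d) (t : ℝ) : ℝ :=
  densOf (F i) t / (cdf1 (F (i - 1)) t - cdf1 (F i) t)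

/-- The set `L^F` of ordered vectors `x ∈ ℝ^d` such that `F_{i-1}(t) > F_i(t)` for all
`t ∈ (x_{i-1}, x_i)` and all `2 ≤ i ≤ d`. -/
def LsetF [NeZero d] (F : Fin d → Measure ℝ) : Set (Fin d → ℝ) :=
  {x | Monotone x ∧ ∀ i : Fin d, i ≠ 0 →
    ∀ t ∈ Ioo (x (i - 1)) (x i), cdf1 (F i) t < cdf1 (F (i - 1)) t}

/-- The density `f_F` of the maximum entropy distribution of order statistics with marginal
cdfs `F` :
`f_F(x) = f_1(x_1) ∏_{i=2}^d ℓ_i(x_i) exp(−∫_{x_{i-1}}^{x_i} ℓ_i(s) ds) 1_{L^F}(x)`. -/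
def fF [NeZero d] (F : Fin d → Measure ℝ) : (Fin d → ℝ) → ℝ :=
  (LsetF F).indicator fun x =>
    densOf (F 0) (x 0) *
      ∏ i ∈ Finset.univ.erase (0 : Fin d),
        ellF F i (x i) * Real.exp (-∫ s in (x (i - 1))..(x i), ellF F i s)

open Filter ProbabilityTheory
open scoped Topology

section RelativeEntropy

variable {α β : Type*} {mα : MeasurableSpace α} {mβ : MeasurableSpace β} {μ ρ σ : Measure α}

/-- The integral of a real function with values in `EReal`: the difference of the lower integrals
of the positive and of the negative part.  When both are infinite the value is `⊤ - ⊤ = ⊥`. -/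
def eintegral (μ : Measure α) (f : α → ℝ) : EReal :=
  ((∫⁻ x, ENNReal.ofReal (f x) ∂μ : ℝ≥0∞) : EReal)
    - ((∫⁻ x, ENNReal.ofReal (-f x) ∂μ : ℝ≥0∞) : EReal)

lemma eintegral_congr_ae {f g : α → ℝ} (h : f =ᵐ[μ] g) : eintegral μ f = eintegral μ g := by
  unfold eintegral
  congr 2 <;> exact lintegral_congr_ae (h.mono fun x hx => by simp only [hx])

lemma eintegral_map {φ : α → β} (hφ : Measurable φ) {f : β → ℝ} (hf : Measurable f) :
    eintegral (μ.map φ) f = eintegral μ (f ∘ φ) := by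
  unfold eintegral
  rw [lintegral_map (by fun_prop) hφ, lintegral_map (by fun_prop) hφ]
  rfl

lemma eintegral_eq_integral {f : α → ℝ} (hf : Integrable f μ) :
    eintegral μ f = ((∫ x, f x ∂μ : ℝ) : EReal) := by
  rw [integral_eq_lintegral_pos_part_sub_lintegral_neg_part hf, EReal.coe_sub,
    EReal.coe_ennreal_toReal hf.lintegral_lt_top.ne,
    EReal.coe_ennreal_toReal (by exact hf.neg.lintegral_lt_top.ne), eintegral]

lemma integrable_of_lintegral_ofReal_ne_top {f : α → ℝ} (hf : AEMeasurable f μ)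
    (hpos : ∫⁻ x, ENNReal.ofReal (f x) ∂μ ≠ ⊤) (hneg : ∫⁻ x, ENNReal.ofReal (-f x) ∂μ ≠ ⊤) :
    Integrable f μ := by
  refine ⟨hf.aestronglyMeasurable, ?_⟩
  calc ∫⁻ x, ‖f x‖ₑ ∂μ
      ≤ ∫⁻ x, (ENNReal.ofReal (f x) + ENNReal.ofReal (-f x)) ∂μ := by
        refine lintegral_mono fun x => ?_
        rw [Real.enorm_eq_ofReal_abs]
        rcases abs_choice (f x) with h | h <;> rw [h]
        exacts [le_self_add, le_add_self]
    _ = ∫⁻ x, ENNReal.ofReal (f x) ∂μ + ∫⁻ x, ENNReal.ofReal (-f x) ∂μ :=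
        lintegral_add_left' hf.ennreal_ofReal _
    _ < ⊤ := ENNReal.add_lt_top.2 ⟨hpos.lt_top, hneg.lt_top⟩

lemma lintegral_ofReal_add_ne_top {f g : α → ℝ} (hf : ∫⁻ x, ENNReal.ofReal (f x) ∂μ ≠ ⊤)
    (hg : Integrable g μ) : ∫⁻ x, ENNReal.ofReal (f x + g x) ∂μ ≠ ⊤ := by
  refine ne_top_of_le_ne_top (ENNReal.add_ne_top.2 ⟨hf, hg.lintegral_lt_top.ne⟩) ?_
  rw [← lintegral_add_right' _ hg.aemeasurable.ennreal_ofReal]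
  exact lintegral_mono fun x => ENNReal.ofReal_add_le

lemma lintegral_ofReal_add_eq_top_iff {f g : α → ℝ} (hg : Integrable g μ) :
    ∫⁻ x, ENNReal.ofReal (f x + g x) ∂μ = ⊤ ↔ ∫⁻ x, ENNReal.ofReal (f x) ∂μ = ⊤ := by
  refine not_iff_not.1 ⟨fun h => ?_, fun h => lintegral_ofReal_add_ne_top h hg⟩
  simpa using lintegral_ofReal_add_ne_top h hg.neg

lemma eintegral_add {f g : α → ℝ} (hf : AEMeasurable f μ) (hg : Integrable g μ) :
    eintegral μ (f + g) = eintegral μ f + ((∫ x, g x ∂μ : ℝ) : EReal) := by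
  have hpos := lintegral_ofReal_add_eq_top_iff (f := f) hg
  have hneg := lintegral_ofReal_add_eq_top_iff (f := fun x => -f x) hg.neg
  simp only [Pi.neg_apply, ← neg_add] at hneg
  by_cases hn : ∫⁻ x, ENNReal.ofReal (-f x) ∂μ = ⊤
  · simp only [eintegral, Pi.add_apply, hneg.2 hn, hn, EReal.coe_ennreal_top,
      sub_eq_add_neg, EReal.neg_top, EReal.add_bot, EReal.bot_add]
  by_cases hp : ∫⁻ x, ENNReal.ofReal (f x) ∂μ = ⊤
  · have hn' := mt hneg.1 hn
    simp only [eintegral, Pi.add_apply, hpos.2 hp, hp, EReal.coe_ennreal_top]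
    rw [EReal.top_sub (by simpa only [ne_eq, EReal.coe_ennreal_eq_top_iff] using hn'),
      EReal.top_sub (by simpa only [ne_eq, EReal.coe_ennreal_eq_top_iff] using hn),
      EReal.top_add_coe]
  have hfi := integrable_of_lintegral_ofReal_ne_top hf hp hn
  rw [eintegral_eq_integral (hfi.add hg), eintegral_eq_integral hfi, integral_add' hfi hg,
    EReal.coe_add]

open scoped Classical in
/-- The entropy of `μ` relative to a reference measure `ρ`: minus the Kullback–Leibler divergence
of `μ` from `ρ` when `μ` and `ρ` are probability measures, and the differential entropy when `ρ` is
Lebesgue measure. -/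
def relEntropy (μ ρ : Measure α) : EReal :=
  if μ ≪ ρ then eintegral μ (-llr μ ρ) else ⊥

lemma relEntropy_of_ac (h : μ ≪ ρ) : relEntropy μ ρ = eintegral μ (-llr μ ρ) :=
  if_pos h

lemma relEntropy_of_not_ac (h : ¬ μ ≪ ρ) : relEntropy μ ρ = ⊥ := if_neg h

lemma lintegral_ofReal_toReal_rnDeriv_mul [SigmaFinite μ] [SigmaFinite ρ] (h : μ ≪ ρ)
    {f : α → ℝ} (hf : Measurable f) :
    ∫⁻ x, ENNReal.ofReal ((μ.rnDeriv ρ x).toReal * f x) ∂ρ = ∫⁻ x, ENNReal.ofReal (f x) ∂μ := by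
  rw [← lintegral_rnDeriv_mul h hf.ennreal_ofReal.aemeasurable]
  refine lintegral_congr_ae ((μ.rnDeriv_ne_top ρ).mono fun x hx => ?_)
  beta_reduce
  rw [ENNReal.ofReal_mul ENNReal.toReal_nonneg, ENNReal.ofReal_toReal hx]

lemma dEntropy_eq_relEntropy {α : Type*} [MeasureSpace α] [SigmaFinite (volume : Measure α)]
    (μ : Measure α) [SigmaFinite μ] : dEntropy μ = relEntropy μ volume := by
  by_cases h : μ ≪ volume
  · simp only [dEntropy, if_pos h, relEntropy_of_ac h, eintegral, Pi.neg_apply, neg_neg]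
    rw [← lintegral_ofReal_toReal_rnDeriv_mul h (measurable_llr μ volume),
      ← lintegral_ofReal_toReal_rnDeriv_mul (f := fun x => -llr μ volume x) h
        (measurable_llr μ volume).neg]
    simp only [mul_neg, llr]
  · rw [dEntropy, if_neg h, relEntropy_of_not_ac h]

lemma llr_add_llr [SigmaFinite μ] [SigmaFinite ρ] [SigmaFinite σ] (hμρ : μ ≪ ρ) (hρσ : ρ ≪ σ) :
    llr μ ρ + llr ρ σ =ᵐ[μ] llr μ σ := by
  filter_upwards [(hμρ.trans hρσ).ae_le (Measure.rnDeriv_mul_rnDeriv hμρ),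
    Measure.rnDeriv_pos hμρ, hμρ.ae_le (Measure.rnDeriv_pos hρσ),
    hμρ.ae_le (μ.rnDeriv_ne_top ρ), (hμρ.trans hρσ).ae_le (ρ.rnDeriv_ne_top σ)]
    with x hmul hpos hpos' hfin hfin'
  rw [Pi.add_apply, llr, llr, llr, ← hmul, Pi.mul_apply, ENNReal.toReal_mul,
    Real.log_mul (ENNReal.toReal_pos hpos.ne' hfin).ne' (ENNReal.toReal_pos hpos'.ne' hfin').ne']

lemma relEntropy_eq_relEntropy_add [SigmaFinite μ] [SigmaFinite ρ] [SigmaFinite σ]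
    (hρσ : ρ ≪ σ) (hμ : μ ≪ σ → μ ≪ ρ) (hint : Integrable (llr ρ σ) μ) :
    relEntropy μ σ = relEntropy μ ρ + ((-∫ x, llr ρ σ x ∂μ : ℝ) : EReal) := by
  by_cases h : μ ≪ ρ
  · calc relEntropy μ σ
        = eintegral μ (-llr μ ρ + -llr ρ σ) := by
          rw [relEntropy_of_ac (h.trans hρσ), ← neg_add]
          exact eintegral_congr_ae (llr_add_llr h hρσ).symm.neg
      _ = relEntropy μ ρ + ((-∫ x, llr ρ σ x ∂μ : ℝ) : EReal) := by
          rw [relEntropy_of_ac h, eintegral_add (measurable_llr μ ρ).neg.aemeasurable hint.neg,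
            ← integral_neg]
          rfl
  · rw [relEntropy_of_not_ac h, relEntropy_of_not_ac (mt hμ h), EReal.bot_add]

lemma absolutelyContinuous_restrict_iff {s : Set α} (hμs : μ sᶜ = 0) :
    μ ≪ ρ.restrict s ↔ μ ≪ ρ := by
  refine ⟨fun h => h.trans Measure.absolutelyContinuous_restrict, fun h => ?_⟩
  rw [← Measure.restrict_eq_self_of_ae_mem (hμs : ∀ᵐ x ∂μ, x ∈ s)]
  exact h.restrict s

lemma llr_restrict_right [SigmaFinite μ] [SigmaFinite ρ] {s : Set α} (hs : MeasurableSet s)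
    (hμs : μ sᶜ = 0) (hμρ : μ ≪ ρ) : llr μ (ρ.restrict s) =ᵐ[μ] llr μ ρ := by
  filter_upwards [llr_add_llr ((absolutelyContinuous_restrict_iff hμs).2 hμρ)
    Measure.absolutelyContinuous_restrict, hμρ.ae_le (ρ.rnDeriv_restrict_self hs),
    (hμs : ∀ᵐ x ∂μ, x ∈ s)] with x hsum hself hx
  have hzero : llr (ρ.restrict s) ρ x = 0 := by
    rw [llr, hself, indicator_of_mem hx, Pi.one_apply, ENNReal.toReal_one, Real.log_one]
  rw [← hsum, Pi.add_apply, hzero, add_zero]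

lemma relEntropy_restrict_right [SigmaFinite μ] [SigmaFinite ρ] {s : Set α}
    (hs : MeasurableSet s) (hμs : μ sᶜ = 0) : relEntropy μ (ρ.restrict s) = relEntropy μ ρ := by
  by_cases h : μ ≪ ρ
  · rw [relEntropy_of_ac h, relEntropy_of_ac ((absolutelyContinuous_restrict_iff hμs).2 h)]
    exact eintegral_congr_ae (llr_restrict_right hs hμs h).neg
  · rw [relEntropy_of_not_ac h,
      relEntropy_of_not_ac (mt (absolutelyContinuous_restrict_iff hμs).1 h)]

lemma map_map_of_ae_leftInverse {f : α → β} {g : β → α} (hf : Measurable f)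
    (hg : AEMeasurable g (μ.map f)) (hgf : ∀ᵐ x ∂μ, g (f x) = x) : (μ.map f).map g = μ := by
  rw [AEMeasurable.map_map_of_aemeasurable hg hf.aemeasurable]
  exact (Measure.map_congr hgf).trans Measure.map_id

lemma map_withDensity_comp {f : α → β} (hf : Measurable f) {c : β → ℝ≥0∞} (hc : Measurable c) :
    (μ.withDensity (c ∘ f)).map f = (μ.map f).withDensity c := by
  ext s hs
  rw [Measure.map_apply hf hs, withDensity_apply _ (hf hs), withDensity_apply _ hs,
    setLIntegral_map hs hc hf]
  rfl

section LeftInverse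

variable {f : α → β} {g : β → α} (hf : Measurable f) (hg : AEMeasurable g (ρ.map f))
  (hgρ : ∀ᵐ x ∂ρ, g (f x) = x) (hgμ : ∀ᵐ x ∂μ, g (f x) = x)
include hf hg hgρ hgμ

lemma withDensity_rnDeriv_map_comp [SigmaFinite (μ.map f)] [SigmaFinite (ρ.map f)]
    (h : μ.map f ≪ ρ.map f) :
    ρ.withDensity ((μ.map f).rnDeriv (ρ.map f) ∘ f) = μ := by
  let ρ' := ρ.withDensity ((μ.map f).rnDeriv (ρ.map f) ∘ f)
  have hmap : ρ'.map f = μ.map f := by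
    rw [map_withDensity_comp hf (Measure.measurable_rnDeriv _ _),
      Measure.withDensity_rnDeriv_eq _ _ h]
  have hgμ' := hg.mono_ac h
  calc ρ' = (ρ'.map f).map g :=
        (map_map_of_ae_leftInverse hf (by rwa [hmap])
          ((withDensity_absolutelyContinuous _ _).ae_le hgρ)).symm
    _ = μ := by rw [hmap, map_map_of_ae_leftInverse hf hgμ' hgμ]

lemma map_absolutelyContinuous_map_iff [SigmaFinite (μ.map f)] [SigmaFinite (ρ.map f)] :
    μ.map f ≪ ρ.map f ↔ μ ≪ ρ := by
  refine ⟨fun h => ?_, fun h => h.map hf⟩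
  rw [← withDensity_rnDeriv_map_comp hf hg hgρ hgμ h]
  exact withDensity_absolutelyContinuous _ _

lemma relEntropy_map [SigmaFinite ρ] [SigmaFinite (μ.map f)] [SigmaFinite (ρ.map f)] :
    relEntropy (μ.map f) (ρ.map f) = relEntropy μ ρ := by
  by_cases h : μ ≪ ρ
  · have hrn : _ =ᵐ[μ] _ := h.ae_le (ρ.rnDeriv_withDensity
      ((Measure.measurable_rnDeriv (μ.map f) (ρ.map f)).comp hf))
    rw [withDensity_rnDeriv_map_comp hf hg hgρ hgμ (h.map hf)] at hrn
    rw [relEntropy_of_ac h, relEntropy_of_ac (h.map hf),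
      eintegral_map hf (measurable_llr _ _).neg]
    refine eintegral_congr_ae (hrn.mono fun x hx => ?_)
    simp only [Pi.neg_apply, Function.comp_apply, llr, hx]
  · rw [relEntropy_of_not_ac h,
      relEntropy_of_not_ac (mt (map_absolutelyContinuous_map_iff hf hg hgρ hgμ).1 h)]

end LeftInverse

end RelativeEntropy

section Product

lemma lintegral_prod_eval {n : ℕ} {E : Fin n → Type*} [∀ i, MeasurableSpace (E i)]
    (μ : ∀ i, Measure (E i)) [∀ i, SigmaFinite (μ i)] {f : ∀ i, E i → ℝ≥0∞}
    (hf : ∀ i, Measurable (f i)) :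
    ∫⁻ x, ∏ i, f i (x i) ∂Measure.pi μ = ∏ i, ∫⁻ t, f i t ∂μ i := by
  induction n with
  | zero => simp
  | succ n ih =>
    calc ∫⁻ x, ∏ i, f i (x i) ∂Measure.pi μ
        = ∫⁻ x : E 0 × (∀ i : Fin n, E i.succ), f 0 x.1 * ∏ i : Fin n, f i.succ (x.2 i)
            ∂(μ 0).prod (Measure.pi fun i => μ i.succ) := by
          have hprod : Measurable fun x : ∀ i, E i => ∏ i, f i (x i) := by fun_prop
          refine (((measurePreserving_piFinSuccAbove μ 0).symm _).lintegral_comp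
            hprod).symm.trans (lintegral_congr fun x => ?_)
          rw [Fin.prod_univ_succ]
          rfl
      _ = (∫⁻ t, f 0 t ∂μ 0) * ∏ i : Fin n, ∫⁻ t, f i.succ t ∂μ i.succ := by
          have hprod : Measurable fun y : ∀ i : Fin n, E i.succ => ∏ i, f i.succ (y i) := by
            fun_prop
          rw [← ih _ fun i => hf _]
          exact lintegral_prod_mul (hf 0).aemeasurable hprod.aemeasurable
      _ = ∏ i, ∫⁻ t, f i t ∂μ i := by rw [Fin.prod_univ_succ]

variable {E : Fin d → Type*} [∀ i, MeasurableSpace (E i)]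

lemma pi_withDensity (μ : ∀ i, Measure (E i)) [∀ i, SigmaFinite (μ i)] {f : ∀ i, E i → ℝ≥0∞}
    (hf : ∀ i, Measurable (f i)) [∀ i, SigmaFinite ((μ i).withDensity (f i))] :
    Measure.pi (fun i => (μ i).withDensity (f i)) =
      (Measure.pi μ).withDensity fun x => ∏ i, f i (x i) := by
  refine Measure.pi_eq fun s hs => ?_
  have hind : (univ.pi s).indicator (fun x : ∀ i, E i => ∏ i, f i (x i)) =
      fun x => ∏ i, (s i).indicator (f i) (x i) := by
    ext x
    by_cases hx : x ∈ univ.pi s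
    · rw [indicator_of_mem hx]
      exact Finset.prod_congr rfl fun i _ => (indicator_of_mem (hx i trivial) _).symm
    · rw [indicator_of_notMem hx]
      simp only [mem_univ_pi, not_forall] at hx
      obtain ⟨i, hi⟩ := hx
      exact (Finset.prod_eq_zero (Finset.mem_univ i) (indicator_of_notMem hi _)).symm
  rw [withDensity_apply _ (.univ_pi hs), ← lintegral_indicator (.univ_pi hs), hind,
    lintegral_prod_eval μ fun i => (hf i).indicator (hs i)]
  exact Finset.prod_congr rfl fun i _ => by
    rw [lintegral_indicator (hs i), withDensity_apply _ (hs i)]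

variable {δ l : ∀ i, Measure (E i)} [∀ i, SigmaFinite (δ i)] [∀ i, SigmaFinite (l i)]
  (hδ : ∀ i, δ i ≪ l i)
include hδ

lemma pi_eq_withDensity_prod_rnDeriv :
    Measure.pi δ = (Measure.pi l).withDensity fun x => ∏ i, (δ i).rnDeriv (l i) (x i) := by
  have hδl := fun i => Measure.withDensity_rnDeriv_eq _ _ (hδ i)
  have : ∀ i, SigmaFinite ((l i).withDensity ((δ i).rnDeriv (l i))) := fun i => by
    rw [hδl i]; infer_instance
  rw [← pi_withDensity l fun i => Measure.measurable_rnDeriv _ _]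
  simp only [hδl]

lemma pi_absolutelyContinuous_pi : Measure.pi δ ≪ Measure.pi l := by
  rw [pi_eq_withDensity_prod_rnDeriv hδ]
  exact withDensity_absolutelyContinuous _ _

lemma rnDeriv_pi : (Measure.pi δ).rnDeriv (Measure.pi l) =ᵐ[Measure.pi l]
    fun x => ∏ i, (δ i).rnDeriv (l i) (x i) := by
  have := (Measure.pi l).rnDeriv_withDensity
    (f := fun x => ∏ i, (δ i).rnDeriv (l i) (x i)) (by fun_prop)
  rwa [← pi_eq_withDensity_prod_rnDeriv hδ] at this

variable {ν : Measure (∀ i, E i)}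

section DominatedMarginals

variable (hν : ∀ i, ν.map (fun x => x i) ≪ δ i)
include hν

lemma ae_rnDeriv_eval_ne_zero : ∀ᵐ x ∂ν, ∀ i, (δ i).rnDeriv (l i) (x i) ≠ 0 :=
  ae_all_iff.2 fun i => ae_of_ae_map (measurable_pi_apply i).aemeasurable
    ((hν i).ae_le ((Measure.rnDeriv_pos (hδ i)).mono fun _ h => h.ne'))

lemma absolutelyContinuous_pi_of_map_eval (h : ν ≪ Measure.pi l) : ν ≪ Measure.pi δ := by
  have hne : ∀ᵐ x ∂ν, ∏ i, (δ i).rnDeriv (l i) (x i) ≠ 0 :=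
    (ae_rnDeriv_eval_ne_zero hδ hν).mono fun x hx => Finset.prod_ne_zero_iff.2 fun i _ => hx i
  rw [pi_eq_withDensity_prod_rnDeriv hδ]
  refine Measure.AbsolutelyContinuous.mk fun s hs hs0 => ?_
  rw [withDensity_apply _ hs, setLIntegral_eq_zero_iff hs (by fun_prop)] at hs0
  have hnotMem : ∀ᵐ x ∂ν, x ∉ s := by
    filter_upwards [h.ae_le hs0, hne] with x hx hxne hxs using hxne (hx hxs)
  exact measure_eq_zero_iff_ae_notMem.2 hnotMem

lemma llr_pi (h : ν ≪ Measure.pi l) :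
    llr (Measure.pi δ) (Measure.pi l) =ᵐ[ν] fun x => ∑ i, llr (δ i) (l i) (x i) := by
  have hfin : ∀ᵐ x ∂ν, ∀ i, (δ i).rnDeriv (l i) (x i) ≠ ⊤ :=
    ae_all_iff.2 fun i => ae_of_ae_map (measurable_pi_apply i).aemeasurable
      (((hν i).trans (hδ i)).ae_le ((δ i).rnDeriv_ne_top (l i)))
  filter_upwards [h.ae_le (rnDeriv_pi hδ), ae_rnDeriv_eval_ne_zero hδ hν, hfin]
    with x hx hpos hfin
  rw [llr, hx, ENNReal.toReal_prod,
    Real.log_prod fun i _ => (ENNReal.toReal_pos (hpos i) (hfin i)).ne']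
  rfl

end DominatedMarginals

lemma relEntropy_pi_eq [SigmaFinite ν] (hν : ∀ i, ν.map (fun x => x i) = δ i)
    (hint : ∀ i, Integrable (llr (δ i) (l i)) (δ i)) :
    relEntropy ν (Measure.pi l) =
      relEntropy ν (Measure.pi δ) + ∑ i, relEntropy (δ i) (l i) := by
  have hνδ : ∀ i, ν.map (fun x => x i) ≪ δ i := fun i => (hν i).absolutelyContinuous
  have heval : ∀ i, MeasurePreserving (fun x : ∀ i, E i => x i) ν (δ i) := fun i =>
    ⟨measurable_pi_apply i, hν i⟩
  have hint' : ∀ i, Integrable (fun x => llr (δ i) (l i) (x i)) ν := fun i =>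
    (heval i).integrable_comp_of_integrable (hint i)
  have hsum : ((-∫ x, ∑ i, llr (δ i) (l i) (x i) ∂ν : ℝ) : EReal) =
      ∑ i, relEntropy (δ i) (l i) := by
    rw [integral_finsetSum _ fun i _ => hint' i, ← Finset.sum_neg_distrib]
    refine (map_sum (⟨⟨Real.toEReal, EReal.coe_zero⟩, EReal.coe_add⟩ : ℝ →+ EReal) _ _).trans
      (Finset.sum_congr rfl fun i _ => ?_)
    rw [relEntropy_of_ac (hδ i), eintegral_eq_integral (hint i).neg, ← integral_neg,
      ← (heval i).map_eq, integral_map (measurable_pi_apply i).aemeasurable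
        (measurable_llr _ _).neg.aestronglyMeasurable]
    rfl
  by_cases h : ν ≪ Measure.pi l
  · have hllr := llr_pi hδ hνδ h
    rw [relEntropy_eq_relEntropy_add (pi_absolutelyContinuous_pi hδ)
      (absolutelyContinuous_pi_of_map_eval hδ hνδ), integral_congr_ae hllr, hsum]
    exact (integrable_congr hllr).2
      (integrable_finsetSum _ fun i _ => hint' i)
  · have h' : ¬ ν ≪ Measure.pi δ := fun h' => h (h'.trans (pi_absolutelyContinuous_pi hδ))
    rw [relEntropy_of_not_ac h, relEntropy_of_not_ac h', EReal.bot_add]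

end Product

section Bounded

variable {α : Type*} {mα : MeasurableSpace α} {μ ρ : Measure α}

lemma rnDeriv_le_of_le_smul [SigmaFinite μ] [IsFiniteMeasure ρ] {c : NNReal} (h : μ ≤ c • ρ) :
    ∀ᵐ x ∂ρ, μ.rnDeriv ρ x ≤ c := by
  refine ae_le_of_forall_setLIntegral_le_of_sigmaFinite (Measure.measurable_rnDeriv _ _)
    fun s _ _ => ?_
  refine (Measure.setLIntegral_rnDeriv_le s).trans ((h s).trans ?_)
  simp

lemma integrable_llr_of_le_smul [SigmaFinite μ] [IsFiniteMeasure ρ] {c : NNReal}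
    (h : μ ≤ c • ρ) : Integrable (llr μ ρ) μ := by
  have hac : μ ≪ ρ := (Measure.absolutelyContinuous_of_le h).trans
    (Measure.smul_absolutelyContinuous)
  obtain ⟨M, hM⟩ := (isCompact_Icc (a := (0 : ℝ)) (b := c)).exists_bound_of_continuousOn
    Real.continuous_mul_log.continuousOn
  rw [← integrable_rnDeriv_mul_log_iff hac]
  refine Integrable.of_bound (C := M) (by fun_prop) ?_
  filter_upwards [rnDeriv_le_of_le_smul h] with x hx
  exact hM _ ⟨ENNReal.toReal_nonneg, ENNReal.toReal_mono ENNReal.coe_ne_top hx⟩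

end Bounded

section Cdf

section FiniteMeasure

variable (ν : Measure ℝ) [IsFiniteMeasure ν]

lemma ofReal_cdf1 (x : ℝ) : ENNReal.ofReal (cdf1 ν x) = ν (Iic x) :=
  ENNReal.ofReal_toReal (measure_ne_top _ _)

lemma cdf1_mono : Monotone (cdf1 ν) := fun _ _ h =>
  ENNReal.toReal_mono (measure_ne_top _ _) (measure_mono (Iic_subset_Iic.2 h))

lemma measurable_cdf1 : Measurable (cdf1 ν) := (cdf1_mono ν).measurable

lemma measure_Icc_eq_zero_of_cdf1_eq [NullSingletonClass ν] {a b : ℝ}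
    (h : cdf1 ν a = cdf1 ν b) : ν (Icc a b) = 0 := by
  rw [← measure_congr (Ioc_ae_eq_Icc (μ := ν) (a := a) (b := b)), ← Iic_sdiff_Iic]
  rcases le_total a b with hab | hba
  · rw [measure_sdiff (Iic_subset_Iic.2 hab) nullMeasurableSet_Iic (measure_ne_top _ _),
      ← ofReal_cdf1, ← ofReal_cdf1, h, tsub_self]
  · rw [sdiff_eq_empty.2 (Iic_subset_Iic.2 hba), measure_empty]

lemma measure_preimage_cdf1_singleton [NullSingletonClass ν] (c : ℝ) :
    ν (cdf1 ν ⁻¹' {c}) = 0 := by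
  rw [(measurable_cdf1 ν (measurableSet_singleton c)).measure_eq_iSup_isCompact]
  simp only [ENNReal.iSup_eq_zero]
  intro K hKc hK
  rcases K.eq_empty_or_nonempty with rfl | hne
  · exact measure_empty
  refine measure_mono_null
    (fun x hx => mem_Icc.2 ⟨csInf_le hK.bddBelow hx, le_csSup hK.bddAbove hx⟩)
    (measure_Icc_eq_zero_of_cdf1_eq ν (a := sInf K) (b := sSup K) ?_)
  exact (hKc (hK.sInf_mem hne)).trans (hKc (hK.sSup_mem hne)).symm

lemma preimage_cdf1_Iic_ae_eq [NullSingletonClass ν] (x : ℝ) :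
    cdf1 ν ⁻¹' Iic (cdf1 ν x) =ᵐ[ν] Iic x := by
  have hne : ∀ᵐ y ∂ν, cdf1 ν y ≠ cdf1 ν x :=
    measure_eq_zero_iff_ae_notMem.1 (measure_preimage_cdf1_singleton ν _)
  filter_upwards [hne] with y hy
  refine propext ⟨fun hyx => ?_, fun hyx => cdf1_mono ν hyx⟩
  by_contra hxy
  exact hy (le_antisymm hyx (cdf1_mono ν (le_of_not_ge hxy)))

lemma cdf1_map_cdf1 [NullSingletonClass ν] {δ : Measure ℝ} (h : δ ≪ ν) (x : ℝ) :
    cdf1 (δ.map (cdf1 ν)) (cdf1 ν x) = cdf1 δ x := by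
  rw [cdf1, Measure.map_apply (measurable_cdf1 ν) measurableSet_Iic,
    measure_congr (h.ae_le (preimage_cdf1_Iic_ae_eq ν x)), cdf1]

end FiniteMeasure

variable (ν : Measure ℝ) [IsProbabilityMeasure ν]

lemma cdf1_eq_cdf : cdf1 ν = cdf ν :=
  funext fun x => (cdf_eq_real ν x).symm

lemma continuous_cdf1 [NullSingletonClass ν] : Continuous (cdf1 ν) := by
  rw [cdf1_eq_cdf, continuous_iff_continuousAt]
  intro x
  have hjump := (cdf ν).measure_singleton x
  rw [measure_cdf, measure_singleton, eq_comm, ENNReal.ofReal_eq_zero] at hjump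
  rw [(monotone_cdf ν).continuousAt_iff_leftLim_eq_rightLim, StieltjesFunction.rightLim_eq]
  exact le_antisymm ((monotone_cdf ν).leftLim_le le_rfl) (sub_nonpos.1 hjump)

lemma exists_cdf1_lt {a : ℝ} (ha : 0 < a) : ∃ x, cdf1 ν x < a := by
  rw [cdf1_eq_cdf]
  exact ((tendsto_order.1 (tendsto_cdf_atBot ν)).2 a ha).exists

lemma exists_lt_cdf1 {a : ℝ} (ha : a < 1) : ∃ x, a < cdf1 ν x := by
  rw [cdf1_eq_cdf]
  exact ((tendsto_order.1 (tendsto_cdf_atTop ν)).1 a ha).exists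

lemma measure_preimage_cdf1_Iic [NullSingletonClass ν] (a : ℝ) :
    ν (cdf1 ν ⁻¹' Iic a) = ENNReal.ofReal (min a 1) := by
  rcases le_or_gt 1 a with h1 | h1
  · have huniv : cdf1 ν ⁻¹' Iic a = univ :=
      eq_univ_of_forall fun x => (cdf1_eq_cdf ν ▸ cdf_le_one ν x : cdf1 ν x ≤ 1).trans h1
    rw [huniv, measure_univ, min_eq_right h1, ENNReal.ofReal_one]
  rw [min_eq_left h1.le]
  rcases le_or_gt a 0 with h0 | h0
  · rw [ENNReal.ofReal_of_nonpos h0]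
    exact measure_mono_null (fun x hx => le_antisymm (le_trans hx h0) ENNReal.toReal_nonneg)
      (measure_preimage_cdf1_singleton ν 0)
  · obtain ⟨x, hx⟩ := exists_cdf1_lt ν h0
    obtain ⟨y, hy⟩ := exists_lt_cdf1 ν h1
    obtain ⟨z, rfl⟩ :=
      mem_range_of_exists_le_of_exists_ge (continuous_cdf1 ν) ⟨x, hx.le⟩ ⟨y, hy.le⟩
    rw [measure_congr (preimage_cdf1_Iic_ae_eq ν z), ofReal_cdf1]

lemma map_cdf1 [NullSingletonClass ν] : ν.map (cdf1 ν) = uniform01 := by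
  refine Measure.ext_of_Iic _ _ fun a => ?_
  rw [Measure.map_apply (measurable_cdf1 ν) measurableSet_Iic, measure_preimage_cdf1_Iic,
    uniform01, Measure.restrict_apply measurableSet_Iic, ← Ici_inter_Iic, inter_left_comm,
    Iic_inter_Iic, Ici_inter_Iic, Real.volume_Icc, sub_zero]

lemma ae_qReal_cdf1 [NullSingletonClass ν] : ∀ᵐ x ∂ν, qReal ν (cdf1 ν x) = x := by
  -- Almost every point avoids the flat pieces of the cdf, since each of them contains a rational.
  have hne : ∀ᵐ x ∂ν, ∀ r : ℚ, cdf1 ν x ≠ cdf1 ν r := ae_all_iff.2 fun r =>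
    measure_eq_zero_iff_ae_notMem.1 (measure_preimage_cdf1_singleton ν _)
  filter_upwards [hne] with x hx
  have hIci : {s : ℝ | cdf1 ν x ≤ cdf1 ν s} = Ici x := by
    refine Subset.antisymm (fun s hs => ?_) fun s hs => cdf1_mono ν hs
    by_contra hsx
    obtain ⟨r, hsr, hrx⟩ := exists_rat_btwn (lt_of_not_ge hsx : s < x)
    exact hx r (le_antisymm (le_trans hs (cdf1_mono ν hsr.le)) (cdf1_mono ν hrx.le))
  rw [qReal, hIci, csInf_Ici]

lemma aemeasurable_qReal : AEMeasurable (qReal ν) uniform01 := by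
  rw [uniform01, ← Measure.restrict_congr_set Ioo_ae_eq_Icc]
  refine aemeasurable_restrict_of_monotoneOn measurableSet_Ioo fun s hs t ht hst => ?_
  obtain ⟨y, hy⟩ := exists_cdf1_lt ν hs.1
  obtain ⟨z, hz⟩ := exists_lt_cdf1 ν ht.2
  refine csInf_le_csInf ⟨y, fun x hx => le_of_not_gt fun hxy => ?_⟩ ⟨z, hz.le⟩
    fun x hx => le_trans hst hx
  exact absurd (cdf1_mono ν hxy.le) (not_le.2 (hy.trans_le hx))

end Cdf

section Copula

instance : IsProbabilityMeasure uniform01 := ⟨by simp [uniform01]⟩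

lemma pi_uniform01 : Measure.pi (fun _ : Fin d => uniform01) =
    (volume : Measure (Fin d → ℝ)).restrict (univ.pi fun _ => Icc 0 1) := by
  unfold uniform01
  rw [volume_pi, Measure.restrict_pi_pi]

lemma marg_map {f : Fin d → ℝ → ℝ} (hf : ∀ i, Measurable (f i)) (ν : Measure (Fin d → ℝ))
    (i : Fin d) : marg (ν.map fun x i => f i (x i)) i = (marg ν i).map (f i) := by
  unfold marg
  rw [Measure.map_map (by fun_prop) (by fun_prop), Measure.map_map (hf i) (by fun_prop)]
  rfl

lemma marg_pi (δ : Fin d → Measure ℝ) [∀ i, IsProbabilityMeasure (δ i)] (i : Fin d) :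
    marg (Measure.pi δ) i = δ i :=
  (measurePreserving_eval δ i).map_eq

lemma measure_compl_pi_Icc_eq_zero {C : Measure (Fin d → ℝ)} (hC : ∀ i, marg C i ≪ uniform01) :
    C (univ.pi fun _ => Icc (0 : ℝ) 1)ᶜ = 0 := by
  have hmem : ∀ᵐ u ∂C, ∀ i, u i ∈ Icc (0 : ℝ) 1 := ae_all_iff.2 fun i =>
    ae_of_ae_map (measurable_pi_apply i).aemeasurable
      ((hC i).ae_le (ae_restrict_mem measurableSet_Icc))
  exact hmem.mono fun u hu i _ => hu i

section Transform

variable (F : Fin d → Measure ℝ) [∀ i, IsProbabilityMeasure (F i)]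

lemma measurable_pi_cdf1 : Measurable fun (x : Fin d → ℝ) i => cdf1 (F i) (x i) :=
  measurable_pi_lambda _ fun i => (measurable_cdf1 (F i)).comp (measurable_pi_apply i)

lemma aemeasurable_pi_qReal {C : Measure (Fin d → ℝ)} (hC : ∀ i, marg C i ≪ uniform01) :
    AEMeasurable (fun (u : Fin d → ℝ) i => qReal (F i) (u i)) C :=
  aemeasurable_pi_lambda _ fun i =>
    ((aemeasurable_qReal (F i)).mono_ac (hC i)).comp_measurable (measurable_pi_apply i)

variable [∀ i, NullSingletonClass (F i)]

lemma pi_map_pi_cdf1 :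
    (Measure.pi F).map (fun x i => cdf1 (F i) (x i)) = Measure.pi fun _ => uniform01 := by
  have hF : ∀ i, (F i).map (cdf1 (F i)) = uniform01 := fun i => map_cdf1 (F i)
  have : ∀ i, SigmaFinite ((F i).map (cdf1 (F i))) := fun i => by rw [hF i]; infer_instance
  rw [Measure.pi_map_pi fun i => (measurable_cdf1 (F i)).aemeasurable]
  simp only [hF]

variable {ν : Measure (Fin d → ℝ)}

lemma marg_map_pi_cdf1_absolutelyContinuous (hν : ∀ i, marg ν i ≪ F i) (i : Fin d) :
    marg (ν.map fun x i => cdf1 (F i) (x i)) i ≪ uniform01 := by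
  rw [marg_map (fun i => measurable_cdf1 (F i)), ← map_cdf1 (F i)]
  exact (hν i).map (measurable_cdf1 _)

lemma ae_pi_qReal_cdf1 (hν : ∀ i, marg ν i ≪ F i) :
    ∀ᵐ x ∂ν, (fun i => qReal (F i) (cdf1 (F i) (x i))) = x := by
  have hall : ∀ᵐ x ∂ν, ∀ i, qReal (F i) (cdf1 (F i) (x i)) = x i := ae_all_iff.2 fun i =>
    ae_of_ae_map (measurable_pi_apply i).aemeasurable ((hν i).ae_le (ae_qReal_cdf1 (F i)))
  exact hall.mono fun x hx => funext hx

lemma joinCopula_map_cdf1 (hν : ∀ i, marg ν i ≪ F i) :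
    joinCopula F (ν.map fun x i => cdf1 (F i) (x i)) = ν :=
  map_map_of_ae_leftInverse (measurable_pi_cdf1 F)
    (aemeasurable_pi_qReal F (marg_map_pi_cdf1_absolutelyContinuous F hν)) (ae_pi_qReal_cdf1 F hν)

lemma relEntropy_map_pi_cdf1 [IsFiniteMeasure ν] (hν : ∀ i, marg ν i ≪ F i) :
    relEntropy (ν.map fun x i => cdf1 (F i) (x i)) volume = relEntropy ν (Measure.pi F) := by
  have hF : ∀ i, marg (Measure.pi F) i ≪ F i := fun i => (marg_pi F i).absolutelyContinuous
  rw [← relEntropy_restrict_right (.univ_pi fun _ => measurableSet_Icc)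
    (measure_compl_pi_Icc_eq_zero (marg_map_pi_cdf1_absolutelyContinuous F hν)), ← pi_uniform01,
    ← pi_map_pi_cdf1 F]
  exact relEntropy_map (measurable_pi_cdf1 F)
    (aemeasurable_pi_qReal F (marg_map_pi_cdf1_absolutelyContinuous F hF))
    (ae_pi_qReal_cdf1 F hF) (ae_pi_qReal_cdf1 F hν)

end Transform

lemma dEntropy_eq_dEntropy_copulaOf_add {ν : Measure (Fin d → ℝ)} [IsProbabilityMeasure ν]
    (hac : ∀ i, marg ν i ≪ volume)
    (hint : ∀ i, Integrable (llr (marg ν i) volume) (marg ν i)) :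
    dEntropy ν = dEntropy (copulaOf ν) + ∑ i, dEntropy (marg ν i) := by
  have hprob : ∀ i, IsProbabilityMeasure (marg ν i) := fun i =>
    Measure.isProbabilityMeasure_map (measurable_pi_apply i).aemeasurable
  have hnull : ∀ i, NullSingletonClass (marg ν i) := fun i => ⟨fun t => hac i (measure_singleton t)⟩
  calc dEntropy ν
      = relEntropy ν (Measure.pi (marg ν)) + ∑ i, relEntropy (marg ν i) volume := by
        rw [dEntropy_eq_relEntropy, volume_pi]
        exact relEntropy_pi_eq hac (fun _ => rfl) hint
    _ = dEntropy (copulaOf ν) + ∑ i, dEntropy (marg ν i) := by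
        rw [← relEntropy_map_pi_cdf1 (marg ν) fun i => .rfl]
        simp only [dEntropy_eq_relEntropy, copulaOf]

end Copula

section Symmetrization

lemma llr_smul_add_of_mutuallySingular {α : Type*} {mα : MeasurableSpace α} {μ ρ : Measure α}
    [IsFiniteMeasure μ] [SigmaFinite ρ] (h : μ ⟂ₘ ρ) {c : ℝ≥0∞} (hc : c ≠ 0) (hc' : c ≠ ⊤) :
    llr μ (c • (μ + ρ)) =ᵐ[μ] fun _ => -Real.log c.toReal := by
  filter_upwards [llr_smul_right (Measure.AbsolutelyContinuous.rfl.add_right ρ) c hc hc',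
    μ.rnDeriv_add_right_of_mutuallySingular h, μ.rnDeriv_self] with x hsmul hadd hself
  rw [hsmul, llr, hadd, hself, ENNReal.toReal_one, Real.log_one, zero_sub]

lemma ae_apply_ne {i j : Fin d} (hij : i ≠ j) : ∀ᵐ x : Fin d → ℝ, x i ≠ x j := by
  let hyperplane : Submodule ℝ (Fin d → ℝ) :=
    LinearMap.ker (LinearMap.proj (R := ℝ) (φ := fun _ => ℝ) i - LinearMap.proj j)
  have hmem : ∀ x, x ∈ hyperplane ↔ x i = x j := fun x => by
    simp only [hyperplane, LinearMap.mem_ker, LinearMap.sub_apply, LinearMap.proj_apply,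
      sub_eq_zero]
  have hne : hyperplane ≠ ⊤ := fun htop => by
    have := (hmem (Pi.single i 1)).1 (htop ▸ Submodule.mem_top)
    simp [Pi.single_eq_of_ne hij.symm] at this
  filter_upwards [measure_eq_zero_iff_ae_notMem.1 (Measure.addHaar_submodule volume _ hne)]
    with x hx using mt (hmem x).2 hx

lemma ae_injective : ∀ᵐ x : Fin d → ℝ, Function.Injective x := by
  have hne : ∀ᵐ x : Fin d → ℝ, ∀ i j : Fin d, i ≠ j → x i ≠ x j :=
    ae_all_iff.2 fun i => ae_all_iff.2 fun j => ae_all_iff.2 ae_apply_ne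
  exact hne.mono fun x hx i j => not_imp_not.1 (hx i j)

lemma measurableSet_strictMono : MeasurableSet {x : Fin d → ℝ | StrictMono x} := by
  simp only [StrictMono, Set.ofPred_forall]
  measurability

lemma measurable_comp_perm (π : Equiv.Perm (Fin d)) :
    Measurable fun (x : Fin d → ℝ) i => x (π i) := by fun_prop

lemma measurableEmbedding_comp_perm (π : Equiv.Perm (Fin d)) :
    MeasurableEmbedding fun (x : Fin d → ℝ) i => x (π i) :=
  (measurable_comp_perm π).measurableEmbedding π.surjective.injective_comp_right

lemma isSymmetric_volume : IsSymmetric (volume : Measure (Fin d → ℝ)) := fun π => by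
  have hπ : (fun (x : Fin d → ℝ) i => x (π i)) =
      MeasurableEquiv.piCongrLeft (fun _ : Fin d => ℝ) π.symm := by
    funext x i
    simpa [MeasurableEquiv.coe_piCongrLeft] using
      (Equiv.piCongrLeft_apply_apply (fun _ : Fin d => ℝ) π.symm x (π i)).symm
  rw [hπ]
  exact (volume_measurePreserving_piCongrLeft (fun _ : Fin d => ℝ) π.symm).map_eq

lemma IsSymmetric.llr_comp_perm {μ ρ : Measure (Fin d → ℝ)} [SigmaFinite μ] [SigmaFinite ρ]
    (hμ : IsSymmetric μ) (hρ : IsSymmetric ρ) (π : Equiv.Perm (Fin d)) :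
    (fun x => llr μ ρ fun i => x (π i)) =ᵐ[ρ] llr μ ρ := by
  have h := (measurableEmbedding_comp_perm π).rnDeriv_map μ ρ
  rw [hμ π, hρ π] at h
  exact h.mono fun x hx => by simp only [llr, hx]

variable (ν : Measure (Fin d → ℝ))

lemma isSymmetric_symmetrize : IsSymmetric (symmetrize ν) := fun σ => by
  rw [symmetrize, Measure.map_smul, Measure.map_finset_sum (measurable_comp_perm σ).aemeasurable]
  congr 1
  refine Fintype.sum_equiv (Equiv.mulRight σ) _ _ fun π => ?_
  rw [Measure.map_map (measurable_comp_perm σ) (measurable_comp_perm π)]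
  rfl

lemma symmetrize_eq_smul_add : symmetrize ν = (d.factorial : ℝ≥0∞)⁻¹ •
    (ν + ∑ π ∈ Finset.univ.erase (1 : Equiv.Perm (Fin d)), ν.map fun x i => x (π i)) := by
  rw [symmetrize, ← Finset.add_sum_erase _ _ (Finset.mem_univ 1)]
  congr 2
  exact Measure.map_id

lemma absolutelyContinuous_symmetrize : ν ≪ symmetrize ν := by
  rw [symmetrize_eq_smul_add]
  exact (Measure.AbsolutelyContinuous.rfl.add_right _).trans
    (Measure.absolutelyContinuous_smul (by simp))

lemma symmetrize_absolutelyContinuous {ν ρ : Measure (Fin d → ℝ)} (hρ : IsSymmetric ρ)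
    (h : ν ≪ ρ) : symmetrize ν ≪ ρ := by
  refine Measure.smul_absolutelyContinuous.trans fun s hs => ?_
  rw [Measure.finsetSum_apply]
  exact Finset.sum_eq_zero fun π _ => (hρ π ▸ h.map (measurable_comp_perm π)) hs

instance [IsProbabilityMeasure ν] : IsProbabilityMeasure (symmetrize ν) := by
  have (π : Equiv.Perm (Fin d)) : IsProbabilityMeasure (ν.map fun x i => x (π i)) :=
    Measure.isProbabilityMeasure_map (measurable_comp_perm π).aemeasurable
  refine ⟨?_⟩
  simp [symmetrize, Fintype.card_perm, ENNReal.inv_mul_cancel, Nat.factorial_ne_zero]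

variable {ν}

lemma lintegral_symmetrize {f : (Fin d → ℝ) → ℝ≥0∞} (hf : Measurable f)
    (hsymm : ∀ π : Equiv.Perm (Fin d), (fun x => f fun i => x (π i)) =ᵐ[ν] f) :
    ∫⁻ x, f x ∂symmetrize ν = ∫⁻ x, f x ∂ν := by
  have hperm : ∀ π : Equiv.Perm (Fin d),
      ∫⁻ x, f x ∂ν.map (fun x i => x (π i)) = ∫⁻ x, f x ∂ν := fun π => by
    rw [lintegral_map hf (measurable_comp_perm π), lintegral_congr_ae (hsymm π)]
  rw [symmetrize, lintegral_smul_measure, lintegral_finsetSum_measure]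
  simp only [hperm, Finset.sum_const, Finset.card_univ, Fintype.card_perm, Fintype.card_fin,
    nsmul_eq_mul, smul_eq_mul]
  rw [← mul_assoc, ENNReal.inv_mul_cancel (by simp [Nat.factorial_ne_zero]) (by simp), one_mul]

lemma eintegral_symmetrize {f : (Fin d → ℝ) → ℝ} (hf : Measurable f)
    (hsymm : ∀ π : Equiv.Perm (Fin d), (fun x => f fun i => x (π i)) =ᵐ[ν] f) :
    eintegral (symmetrize ν) f = eintegral ν f := by
  rw [eintegral, eintegral,
    lintegral_symmetrize (by fun_prop) fun π => (hsymm π).fun_comp ENNReal.ofReal,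
    lintegral_symmetrize (by fun_prop) fun π => (hsymm π).fun_comp fun t => ENNReal.ofReal (-t)]

lemma ae_not_strictMono_comp_perm (hν : ∀ᵐ x ∂ν, StrictMono x) {π : Equiv.Perm (Fin d)}
    (hπ : π ≠ 1) : ∀ᵐ x ∂ν, ¬ StrictMono fun i => x (π i) := by
  filter_upwards [hν] with x hx hxπ
  have hmono : Monotone π := fun i j hij => hx.le_iff_le.1 (hxπ.monotone hij)
  exact hπ ((Equiv.Perm.monotone_iff π).1 hmono)

lemma mutuallySingular_sum_map_perm (hν : ∀ᵐ x ∂ν, StrictMono x) :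
    ν ⟂ₘ ∑ π ∈ Finset.univ.erase (1 : Equiv.Perm (Fin d)), ν.map fun x i => x (π i) := by
  refine ⟨{x | StrictMono x}ᶜ, measurableSet_strictMono.compl, hν, ?_⟩
  rw [compl_compl, Measure.finsetSum_apply]
  refine Finset.sum_eq_zero fun π hπ => ?_
  rw [Measure.map_apply (measurable_comp_perm π) measurableSet_strictMono]
  exact measure_eq_zero_iff_ae_notMem.2
    (ae_not_strictMono_comp_perm hν (Finset.ne_of_mem_erase hπ))

lemma llr_symmetrize [IsFiniteMeasure ν] (hν : ∀ᵐ x ∂ν, StrictMono x) :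
    llr ν (symmetrize ν) =ᵐ[ν] fun _ => Real.log d.factorial := by
  rw [symmetrize_eq_smul_add]
  simpa using llr_smul_add_of_mutuallySingular (mutuallySingular_sum_map_perm hν)
    (c := (d.factorial : ℝ≥0∞)⁻¹) (by simp) (by simp [Nat.factorial_ne_zero])

lemma dEntropy_symmetrize [IsProbabilityMeasure ν] (hν : ∀ᵐ x ∂ν, Monotone x) :
    dEntropy (symmetrize ν) = Real.log d.factorial + dEntropy ν := by
  rw [dEntropy_eq_relEntropy, dEntropy_eq_relEntropy]
  by_cases hac : ν ≪ volume
  · have hac' := symmetrize_absolutelyContinuous isSymmetric_volume hac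
    have hstrict : ∀ᵐ x ∂ν, StrictMono x := by
      filter_upwards [hν, hac.ae_le ae_injective] with x hmono hinj
        using hmono.strictMono_of_injective hinj
    have hllr : -llr (symmetrize ν) volume =ᵐ[ν]
        -llr ν volume + fun _ => Real.log d.factorial := by
      filter_upwards [llr_add_llr (absolutelyContinuous_symmetrize ν) hac',
        llr_symmetrize hstrict] with x hadd hlog
      simp only [Pi.neg_apply, Pi.add_apply, ← hadd, hlog]
      ring
    calc relEntropy (symmetrize ν) volume
        = eintegral (symmetrize ν) (-llr (symmetrize ν) volume) := relEntropy_of_ac hac'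
      _ = eintegral ν (-llr (symmetrize ν) volume) :=
          eintegral_symmetrize (measurable_llr _ _).neg fun π => EventuallyEq.neg
            (hac.ae_le ((isSymmetric_symmetrize ν).llr_comp_perm isSymmetric_volume π))
      _ = relEntropy ν volume + Real.log d.factorial := by
          rw [eintegral_congr_ae hllr, eintegral_add (measurable_llr _ _).neg.aemeasurable
            (integrable_const _), relEntropy_of_ac hac, integral_const, probReal_univ, one_smul]
      _ = Real.log d.factorial + relEntropy ν volume := add_comm _ _
  · rw [relEntropy_of_not_ac hac, EReal.add_bot,
      relEntropy_of_not_ac fun h => hac ((absolutelyContinuous_symmetrize ν).trans h)]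

end Symmetrization

section Average

/-- The equal-weight mixture of the measures `F i`; its cdf is `G = Gbar F`. -/
def avgMeasure (F : Fin d → Measure ℝ) : Measure ℝ := (d : ℝ≥0∞)⁻¹ • ∑ i, F i

lemma IsSymmetric.marg_eq_marg {μ : Measure (Fin d → ℝ)} (hμ : IsSymmetric μ) (i j : Fin d) :
    marg μ i = marg μ j := by
  have hswap : marg (μ.map fun x k => x (Equiv.swap i j k)) i = marg μ j := by
    rw [marg, Measure.map_map (measurable_pi_apply i) (measurable_comp_perm _)]
    simp only [Function.comp_def, Equiv.swap_apply_left, marg]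
  rwa [hμ] at hswap

lemma marg_symmetrize_eq_smul_sum (μ : Measure (Fin d → ℝ)) (i : Fin d) :
    marg (symmetrize μ) i =
      (d.factorial : ℝ≥0∞)⁻¹ • ∑ π : Equiv.Perm (Fin d), marg μ (π i) := by
  rw [marg, symmetrize, Measure.map_smul,
    Measure.map_finset_sum (measurable_pi_apply i).aemeasurable]
  congr 1
  exact Finset.sum_congr rfl fun π _ =>
    Measure.map_map (measurable_pi_apply i) (measurable_comp_perm π)

lemma sum_marg_symmetrize (μ : Measure (Fin d → ℝ)) :
    ∑ i, marg (symmetrize μ) i = ∑ i, marg μ i := by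
  simp only [marg_symmetrize_eq_smul_sum, ← Finset.smul_sum]
  rw [Finset.sum_comm]
  simp only [Equiv.sum_comp, Finset.sum_const, Finset.card_univ, Fintype.card_perm,
    Fintype.card_fin]
  rw [← Nat.cast_smul_eq_nsmul ℝ≥0∞, smul_smul,
    ENNReal.inv_mul_cancel (by simp [Nat.factorial_ne_zero]) (by simp), one_smul]

lemma marg_symmetrize [NeZero d] (μ : Measure (Fin d → ℝ)) (i : Fin d) :
    marg (symmetrize μ) i = avgMeasure (marg μ) := by
  rw [avgMeasure, ← sum_marg_symmetrize,
    Finset.sum_congr rfl fun j _ => (isSymmetric_symmetrize μ).marg_eq_marg j i,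
    Finset.sum_const, Finset.card_univ, Fintype.card_fin, ← Nat.cast_smul_eq_nsmul ℝ≥0∞,
    smul_smul, ENNReal.inv_mul_cancel (by simp [NeZero.ne d]) (by simp), one_smul]

lemma map_symmetrize (μ : Measure (Fin d → ℝ)) {g : ℝ → ℝ} (hg : Measurable g) :
    (symmetrize μ).map (fun x i => g (x i)) = symmetrize (μ.map fun x i => g (x i)) := by
  have hg' : Measurable fun (x : Fin d → ℝ) i => g (x i) := by fun_prop
  rw [symmetrize, symmetrize, Measure.map_smul, Measure.map_finset_sum hg'.aemeasurable]
  congr 1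
  refine Finset.sum_congr rfl fun π _ => ?_
  rw [Measure.map_map hg' (measurable_comp_perm π), Measure.map_map (measurable_comp_perm π) hg']
  rfl

variable (F : Fin d → Measure ℝ)

lemma le_smul_avgMeasure [NeZero d] (i : Fin d) : F i ≤ (d : NNReal) • avgMeasure F := by
  have hd : (d : NNReal) • avgMeasure F = ∑ j, F j := by
    rw [ENNReal.smul_def, avgMeasure, smul_smul, ENNReal.coe_natCast,
      ENNReal.mul_inv_cancel (by simp [NeZero.ne d]) (by simp), one_smul]
  rw [hd]
  exact Finset.single_le_sum (f := F) (fun _ _ => bot_le) (Finset.mem_univ i)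

instance [∀ i, NullSingletonClass (F i)] : NullSingletonClass (avgMeasure F) :=
  ⟨fun t => by simp [avgMeasure]⟩

section Probability

variable [∀ i, IsProbabilityMeasure (F i)]

instance [NeZero d] : IsProbabilityMeasure (avgMeasure F) :=
  ⟨by simp [avgMeasure, ENNReal.inv_mul_cancel, NeZero.ne d]⟩

lemma cdf1_avgMeasure : cdf1 (avgMeasure F) = Gbar F := by
  ext t
  simp [cdf1, avgMeasure, Gbar, ENNReal.toReal_sum, inv_mul_eq_div]

variable [NeZero d]

lemma measurable_Gbar : Measurable (Gbar F) :=
  cdf1_avgMeasure F ▸ measurable_cdf1 (avgMeasure F)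

lemma monotone_Gbar : Monotone (Gbar F) :=
  cdf1_avgMeasure F ▸ cdf1_mono (avgMeasure F)

instance (i : Fin d) : IsProbabilityMeasure (mdiagF F i) :=
  Measure.isProbabilityMeasure_map (measurable_Gbar F).aemeasurable

variable [∀ i, NullSingletonClass (F i)]

lemma mdiagF_le (i : Fin d) : mdiagF F i ≤ (d : NNReal) • uniform01 := by
  rw [mdiagF, ← map_cdf1 (avgMeasure F), cdf1_avgMeasure, ← Measure.map_smul]
  exact Measure.map_mono (le_smul_avgMeasure F i) (measurable_Gbar F)

lemma mdiagF_absolutelyContinuous (i : Fin d) : mdiagF F i ≪ volume :=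
  (Measure.absolutelyContinuous_of_le_smul (mdiagF_le F i)).trans
    Measure.absolutelyContinuous_restrict

lemma integrable_llr_mdiagF (i : Fin d) : Integrable (llr (mdiagF F i) volume) (mdiagF F i) := by
  have hac := Measure.absolutelyContinuous_of_le_smul (mdiagF_le F i)
  have hIcc : mdiagF F i (Icc 0 1)ᶜ = 0 := hac (by simp [uniform01])
  exact (integrable_llr_of_le_smul (mdiagF_le F i)).congr
    (llr_restrict_right measurableSet_Icc hIcc (mdiagF_absolutelyContinuous F i))

lemma cdf1_mdiagF (i : Fin d) (t : ℝ) : cdf1 (mdiagF F i) (Gbar F t) = cdf1 (F i) t := by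
  rw [mdiagF, ← cdf1_avgMeasure]
  exact cdf1_map_cdf1 _ (Measure.absolutelyContinuous_of_le_smul (le_smul_avgMeasure F i)) t

end Probability

section OrderStatistics

variable [NeZero d] {F} [∀ i, IsProbabilityMeasure (F i)] {μ : Measure (Fin d → ℝ)}

lemma measurable_pi_Gbar : Measurable fun (x : Fin d → ℝ) i => Gbar F (x i) := by
  have := measurable_Gbar F
  fun_prop

lemma marg_map_Gbar (hμ : ∀ i, marg μ i = F i) :
    marg (μ.map fun x i => Gbar F (x i)) = mdiagF F := by
  ext1 i
  rw [marg_map (fun _ => measurable_Gbar F), hμ, mdiagF]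

lemma ae_monotone_map_Gbar [IsProbabilityMeasure μ] (hμ : μ {x | Monotone x} = 1) :
    ∀ᵐ x ∂μ.map fun x i => Gbar F (x i), Monotone x := by
  have hmeas : MeasurableSet {x : Fin d → ℝ | Monotone x} := isClosed_monotone.measurableSet
  rw [ae_map_iff measurable_pi_Gbar.aemeasurable hmeas]
  filter_upwards [(prob_compl_eq_zero_iff hmeas).2 hμ] with x hx using (monotone_Gbar F).comp hx

variable [∀ i, NullSingletonClass (F i)]

lemma copulaOf_map_Gbar (hμ : ∀ i, marg μ i = F i) :
    copulaOf (μ.map fun x i => Gbar F (x i)) = copulaOf μ := by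
  rw [copulaOf, marg_map_Gbar hμ, Measure.map_map (measurable_pi_cdf1 _) measurable_pi_Gbar]
  simp only [Function.comp_def, cdf1_mdiagF, copulaOf, hμ]

lemma SF_copulaOf (hμ : ∀ i, marg μ i = F i) :
    SF F (copulaOf μ) = symmetrize (μ.map fun x i => Gbar F (x i)) := by
  have hjoin : joinCopula F (copulaOf μ) = μ := by
    simpa only [copulaOf, hμ] using
      joinCopula_map_cdf1 F fun i => (hμ i).absolutelyContinuous
  have hmarg : marg μ = F := funext hμ
  rw [SF, hjoin, copulaOf]
  simp only [marg_symmetrize, hmarg, cdf1_avgMeasure]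
  exact map_symmetrize μ (measurable_Gbar F)

end OrderStatistics

end Average

/-- Proposition `prop:H(C)_H(SFC)`.  Let `F = (F_1, …, F_d)` be a `d`-tuple
of continuous cdfs on `ℝ` with `F_{i-1} ≥ F_i` pointwise, and let `C ∈ C^OS(F)`.  Then
`H(S_F(C)) = log(d!) + H(C) + ∑_{i=1}^d H(δ^F_(i))`, where `δ^F_(i) = F_i ∘ G^{-1}` (the law
of `G(X_i)` with `X_i ∼ F_i`) and `G = (1/d) ∑_{i=1}^d F_i`. -/
theorem stmt_9 {d : ℕ} [NeZero d] (F : Fin d → Measure ℝ) (hF : IsMargOS F)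
    (C : Measure (Fin d → ℝ)) (hC : C ∈ copulaOS F) :
    dEntropy (SF F C) = ((Real.log (d.factorial : ℝ)) : EReal) + dEntropy C
      + ∑ i : Fin d, dEntropy (mdiagF F i) := by
  obtain ⟨μ, ⟨hμ, hmono, hmarg⟩, rfl⟩ := hC
  have hprob := hF.prob
  have hnull : ∀ i, NullSingletonClass (F i) := fun i => ⟨hF.cont i⟩
  let ν := μ.map fun x i => Gbar F (x i)
  have hν : IsProbabilityMeasure ν :=
    Measure.isProbabilityMeasure_map measurable_pi_Gbar.aemeasurable
  have hνmarg : marg ν = mdiagF F := marg_map_Gbar hmarg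
  calc dEntropy (SF F (copulaOf μ))
      = dEntropy (symmetrize ν) := by rw [SF_copulaOf hmarg]
    _ = Real.log d.factorial + dEntropy ν := dEntropy_symmetrize (ae_monotone_map_Gbar hmono)
    _ = Real.log d.factorial + (dEntropy (copulaOf ν) + ∑ i, dEntropy (marg ν i)) := by
        rw [dEntropy_eq_dEntropy_copulaOf_add
          (fun i => hνmarg ▸ mdiagF_absolutelyContinuous F i)
          (fun i => hνmarg ▸ integrable_llr_mdiagF F i)]
    _ = _ := by rw [copulaOf_map_Gbar hmarg, hνmarg, add_assoc]

end MaxEntOS
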